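/- There exists a deterministic online algorithm for online unit-length busy time scheduling on heterogeneous machines that is 8-competitive: for every collection of machine types (with costs c_k ≥ 1 strictly increasing in k and capacities B_k ∈ ℤ≥1 strictly increasing in k) there is a deterministic online algorithm A such that for every instance J, A(J) is a valid schedule for J and cost(A(J)) ≤ 8·OPT(J). -/

import Mathlib

/-- An instance of unit-length busy time scheduling: a finite set of jobs,
each job `j` having an integer release time `r j` and deadline `d j` with `r j ≤ d j`. -/
structure SchedInstance where
  jobs : Finset ℕ
  r : ℕ → ℤ
  d : ℕ → ℤ
  window : ∀ j ∈ jobs, r j ≤ d j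

/-- A batch: a machine type, an execution time, and a set of jobs. -/
structure Batch where
  btype : ℕ
  time : ℤ
  bjobs : Finset ℕ
deriving DecidableEq

/-- A valid schedule: a finite family of batches, each of size at most the capacity of
its machine type, executing each of its jobs within its release/deadline window,
whose job sets partition the job set of the instance. -/
def ValidSchedule (B : ℕ → ℕ) (P : SchedInstance) (S : Finset Batch) : Prop :=
  (∀ X ∈ S, X.bjobs.card ≤ B X.btype) ∧
  (∀ X ∈ S, ∀ j ∈ X.bjobs, j ∈ P.jobs ∧ P.r j ≤ X.time ∧ X.time ≤ P.d j) ∧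
  (∀ X ∈ S, ∀ Y ∈ S, X ≠ Y → Disjoint X.bjobs Y.bjobs) ∧
  (∀ j ∈ P.jobs, ∃ X ∈ S, j ∈ X.bjobs)

/-- The cost of a schedule: the sum over its batches of the cost of the batch's type. -/
noncomputable def schedCost (c : ℕ → ℝ) (S : Finset Batch) : ℝ :=
  ∑ X ∈ S, c X.btype

/-- The optimal (minimum) cost of a valid schedule for an instance. -/
noncomputable def OPT (c : ℕ → ℝ) (B : ℕ → ℕ) (P : SchedInstance) : ℝ :=
  sInf {x : ℝ | ∃ S : Finset Batch, ValidSchedule B P S ∧ schedCost c S = x}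

/-- Causality of a deterministic online algorithm: whenever two instances have identical
sets of jobs (with identical release times and deadlines) released at or before a time τ,
the batches executed at times ≤ τ coincide. -/
def Causal (A : SchedInstance → Finset Batch) : Prop :=
  ∀ P P' : SchedInstance, ∀ τ : ℤ,
    P.jobs.filter (fun j => P.r j ≤ τ) = P'.jobs.filter (fun j => P'.r j ≤ τ) →
    (∀ j ∈ P.jobs.filter (fun j => P.r j ≤ τ), P.r j = P'.r j ∧ P.d j = P'.d j) →
    (A P).filter (fun X => X.time ≤ τ) = (A P').filter (fun X => X.time ≤ τ)

/-!
The algorithm waits until some unserved job is due and then executes a *block* of jobs, in order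
of increasing deadline, on machines of total cost at most `2 ^ k` times that of a cheapest machine.
For its interval `(start, time]`, it picks `start` before the releases of all unserved jobs due now
and such that every block executed after `start` is full and consists of jobs whose window lies in
the interval. The level `k` is the least one of which no block was executed after `start`. Thus the
intervals of the blocks of any given level are disjoint, and for `k > 0` there is a full block `V`
of level `k - 1` that consists of jobs with window inside the interval.

Round the costs of another schedule up to powers of two, at the price of a factor `2`. If it has a
batch of level at least `k` in the interval of a block of level `k`, charge the block to this batch,
which is charged at most once by each level: in total at most `1 + 2 + ⋯ + 2 ^ l ≤ 2 * 2 ^ l` for a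
batch of level `l`. Otherwise it serves the jobs of `V` in batches of level less than `k`. As `V` is
full, the cost `2 ^ k` is at most twice the total share that these jobs have in the costs of their
batches, and each job is charged in this way at most once. Hence the factor `2 * (2 + 2) = 8`.
-/

section General

theorem sum_two_pow_range_le (n : ℕ) : ∑ k ∈ Finset.range (n + 1), (2 : ℝ) ^ k ≤ 2 * 2 ^ n := by
  rw [geom_sum_eq (by norm_num), pow_succ]
  linarith

theorem exists_mul_two_pow_mem_Icc {a x : ℝ} (ha : 0 < a) (hax : a ≤ x) :
    ∃ k : ℕ, a * 2 ^ k ∈ Set.Icc x (2 * x) := by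
  obtain ⟨n, hn, hn'⟩ := exists_nat_pow_near ((one_le_div ha).2 hax) one_lt_two
  rw [le_div_iff₀' ha] at hn
  rw [div_lt_iff₀' ha] at hn'
  refine ⟨n + 1, hn'.le, ?_⟩
  rw [pow_succ]
  linarith

theorem sum_biUnion_le_sum_sum {ι α M : Type*} [DecidableEq α] [AddCommMonoid M] [PartialOrder M]
    [IsOrderedAddMonoid M] {f : α → M} (hf : ∀ a, 0 ≤ f a) (s : Finset ι) (t : ι → Finset α) :
    ∑ a ∈ s.biUnion t, f a ≤ ∑ i ∈ s, ∑ a ∈ t i, f a := by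
  classical
  induction s using Finset.induction_on with
  | empty => simp
  | insert i s hi ih =>
    rw [Finset.biUnion_insert, Finset.sum_insert hi]
    calc ∑ a ∈ t i ∪ s.biUnion t, f a
        ≤ ∑ a ∈ t i ∪ s.biUnion t, f a + ∑ a ∈ t i ∩ s.biUnion t, f a :=
          le_add_of_nonneg_right (Finset.sum_nonneg fun a _ => hf a)
      _ = ∑ a ∈ t i, f a + ∑ a ∈ s.biUnion t, f a := Finset.sum_union_inter
      _ ≤ ∑ a ∈ t i, f a + ∑ i ∈ s, ∑ a ∈ t i, f a := by gcongr

theorem exists_initial_subset_card_eq {α β : Type*} [LinearOrder β] (f : α → β)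
    (s : Finset α) {n : ℕ} (hn : n ≤ s.card) :
    ∃ t ⊆ s, t.card = n ∧ ∀ b ∈ s, b ∉ t → ∀ a ∈ t, f a ≤ f b := by
  classical
  induction n with
  | zero => exact ⟨∅, by simp⟩
  | succ n ih =>
    obtain ⟨t, hts, rfl, ht⟩ := ih (Nat.le_of_succ_le hn)
    obtain ⟨m, hm, hmin⟩ := (s \ t).exists_min_image f
      (Finset.sdiff_nonempty_of_card_lt_card hn)
    rw [Finset.mem_sdiff] at hm
    refine ⟨insert m t, Finset.insert_subset hm.1 hts, Finset.card_insert_of_notMem hm.2, ?_⟩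
    intro b hb hbt
    rw [Finset.mem_insert, not_or] at hbt
    exact Finset.forall_mem_insert _ _ _ |>.2
      ⟨hmin b (Finset.mem_sdiff.2 ⟨hb, hbt.2⟩), ht b hb hbt.2⟩

theorem exists_initial_subset_card_le {α β : Type*} [LinearOrder β] (f : α → β)
    (s : Finset α) (N : ℕ∞) :
    ∃ t ⊆ s, (t.card : ℕ∞) ≤ N ∧ ∀ b ∈ s, b ∉ t → N ≤ t.card ∧ ∀ a ∈ t, f a ≤ f b := by
  rcases le_total (s.card : ℕ∞) N with hs | hs
  · exact ⟨s, subset_rfl, hs, fun b hb hb' => absurd hb hb'⟩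
  · lift N to ℕ using ne_top_of_le_ne_top (ENat.natCast_ne_top _) hs
    obtain ⟨t, hts, rfl, ht⟩ := exists_initial_subset_card_eq f s (Nat.cast_le.1 hs)
    exact ⟨t, hts, le_rfl, fun b hb hbt => ⟨le_rfl, ht b hb hbt⟩⟩

end General

/-- A set of jobs executed at time `time`, on machines of total cost at most `2 ^ level` units.
Its interval, used to bound the cost, is `(start, time]`. -/
structure Block where
  level : ℕ
  start : ℤ
  time : ℤ
  jobs : Finset ℕ
deriving DecidableEq, Inhabited

/-- The jobs that are in no block of `h`. -/
def unserved (P : SchedInstance) (h : Finset Block) : Finset ℕ :=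
  P.jobs \ h.biUnion Block.jobs

/-- The window of the job `j` lies in the interval of the block `Y`. -/
abbrev Block.Encloses (P : SchedInstance) (Y : Block) (j : ℕ) : Prop :=
  Y.start < P.r j ∧ P.d j ≤ Y.time

/-- After the blocks `h`, the algorithm may execute `Y` next. Here `cap k` is the largest number of
jobs that fit into a block of level `k`, possibly `⊤`. -/
structure NextBlock (cap : ℕ → ℕ∞) (P : SchedInstance) (h : Finset Block) (Y : Block) : Prop where
  subset_unserved : Y.jobs ⊆ unserved P h
  release_le_time : ∀ j ∈ Y.jobs, P.r j ≤ Y.time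
  time_le_deadline : ∀ j ∈ unserved P h, Y.time ≤ P.d j
  exists_due : ∃ j ∈ Y.jobs, P.d j = Y.time
  card_le : Y.jobs.card ≤ cap Y.level
  full_of_notMem : ∀ j ∈ unserved P h, P.r j ≤ Y.time → j ∉ Y.jobs →
    cap Y.level ≤ Y.jobs.card ∧ ∀ i ∈ Y.jobs, P.d i ≤ P.d j
  time_le_start : ∀ X ∈ h, X.level = Y.level → X.time ≤ Y.start
  level_justified : (Y.level = 0 ∧ ∃ j ∈ Y.jobs, Y.Encloses P j) ∨
    ∃ V ∈ h, V.level + 1 = Y.level ∧ cap V.level ≤ V.jobs.card ∧ ∀ j ∈ V.jobs, Y.Encloses P j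

/-- The sets of blocks that arise by executing admissible blocks one after the other. -/
inductive IsHistory (cap : ℕ → ℕ∞) (P : SchedInstance) : Finset Block → Prop
  | empty : IsHistory cap P ∅
  | insert {h : Finset Block} {Y : Block} :
      IsHistory cap P h → NextBlock cap P h Y → IsHistory cap P (insert Y h)

section Histories

variable {cap : ℕ → ℕ∞} {P : SchedInstance} {h : Finset Block} {X Y : Block}

theorem mem_unserved {j : ℕ} : j ∈ unserved P h ↔ j ∈ P.jobs ∧ ∀ X ∈ h, j ∉ X.jobs := by
  simp [unserved]

theorem mem_unserved_insert {j : ℕ} :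
    j ∈ unserved P (insert Y h) ↔ j ∈ unserved P h ∧ j ∉ Y.jobs := by
  simp only [mem_unserved, Finset.forall_mem_insert]
  tauto

theorem unserved_subset_jobs : unserved P h ⊆ P.jobs :=
  Finset.sdiff_subset

theorem NextBlock.unserved_insert_ssubset (hY : NextBlock cap P h Y) :
    unserved P (insert Y h) ⊂ unserved P h := by
  obtain ⟨j, hj, -⟩ := hY.exists_due
  refine Finset.ssubset_iff_subset_ne.2 ⟨fun i hi => (mem_unserved_insert.1 hi).1, fun heq => ?_⟩
  exact (mem_unserved_insert.1 (heq ▸ hY.subset_unserved hj)).2 hj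

theorem NextBlock.disjoint_jobs (hY : NextBlock cap P h Y) (hX : X ∈ h) :
    Disjoint X.jobs Y.jobs :=
  Finset.disjoint_right.2 fun _ hj => (mem_unserved.1 (hY.subset_unserved hj)).2 X hX

theorem NextBlock.time_eq (hX : NextBlock cap P h X) (hY : NextBlock cap P h Y) :
    X.time = Y.time := by
  obtain ⟨i, hi, hit⟩ := hX.exists_due
  obtain ⟨j, hj, hjt⟩ := hY.exists_due
  exact le_antisymm (hjt ▸ hX.time_le_deadline j (hY.subset_unserved hj))
    (hit ▸ hY.time_le_deadline i (hX.subset_unserved hi))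

theorem NextBlock.time_le_of_insert (hX : NextBlock cap P h X)
    (hY : NextBlock cap P (insert X h) Y) : X.time ≤ Y.time := by
  obtain ⟨j, hj, hjt⟩ := hY.exists_due
  exact hjt ▸ hX.time_le_deadline j (mem_unserved_insert.1 (hY.subset_unserved hj)).1

theorem IsHistory.exists_nextBlock_of_mem (hh : IsHistory cap P h) (hX : X ∈ h) :
    ∃ h' ⊆ h, NextBlock cap P h' X := by
  induction hh with
  | empty => simp at hX
  | @insert h Y _ hY ih =>
    rcases Finset.mem_insert.1 hX with rfl | hX
    · exact ⟨h, Finset.subset_insert _ _, hY⟩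
    · obtain ⟨h', hsub, hX⟩ := ih hX
      exact ⟨h', hsub.trans (Finset.subset_insert _ _), hX⟩

theorem IsHistory.jobs_subset (hh : IsHistory cap P h) (hX : X ∈ h) : X.jobs ⊆ P.jobs := by
  obtain ⟨_, -, hX⟩ := hh.exists_nextBlock_of_mem hX
  exact hX.subset_unserved.trans unserved_subset_jobs

theorem IsHistory.pairwise {R : Block → Block → Prop} [Std.Symm R] (hh : IsHistory cap P h)
    (hR : ∀ h X Y, NextBlock cap P h Y → X ∈ h → R X Y) : (h : Set Block).Pairwise R := by
  induction hh with
  | empty => simp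
  | insert _ hY ih =>
    rw [Finset.coe_insert]
    exact ih.insert_of_symm fun X hX _ => symm (hR _ X _ hY hX)

theorem IsHistory.pairwise_disjoint_jobs (hh : IsHistory cap P h) :
    (h : Set Block).PairwiseDisjoint Block.jobs :=
  have : Std.Symm (Function.onFun Disjoint Block.jobs) := ⟨fun _ _ hXY => hXY.symm⟩
  hh.pairwise fun _ _ _ hY hX => hY.disjoint_jobs hX

theorem IsHistory.injOn_level (hh : IsHistory cap P h) (t : ℤ) :
    Set.InjOn Block.level {Y | Y ∈ h ∧ Y.start < t ∧ t ≤ Y.time} := by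
  let R (X Y : Block) : Prop := X.level = Y.level → X.time ≤ Y.start ∨ Y.time ≤ X.start
  have : Std.Symm R := ⟨fun _ _ hXY hl => (hXY hl.symm).symm⟩
  have hR : (h : Set Block).Pairwise R :=
    hh.pairwise fun _ X _ hY hX hl => Or.inl (hY.time_le_start X hX hl)
  rintro X ⟨hX, hXs, hXt⟩ Y ⟨hY, hYs, hYt⟩ hl
  by_contra hne
  have := hR hX hY hne hl
  omega

theorem IsHistory.time_le_deadline (hh : IsHistory cap P h) (hX : X ∈ h) {j : ℕ}
    (hj : j ∈ unserved P h) : X.time ≤ P.d j := by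
  induction hh with
  | empty => simp at hX
  | insert _ hY ih =>
    have hj' := (mem_unserved_insert.1 hj).1
    rcases Finset.mem_insert.1 hX with rfl | hX
    · exact hY.time_le_deadline j hj'
    · exact ih hX hj'

theorem IsHistory.time_le_time (hh : IsHistory cap P h) (hX : X ∈ h) (hY : NextBlock cap P h Y) :
    X.time ≤ Y.time := by
  obtain ⟨j, hj, hjt⟩ := hY.exists_due
  exact hjt ▸ hh.time_le_deadline hX (hY.subset_unserved hj)

theorem IsHistory.exists_start (hh : IsHistory cap P h) (t : ℤ) :
    ∃ s, (∀ X ∈ h, s < X.time → cap X.level ≤ X.jobs.card ∧ ∀ j ∈ X.jobs, s < P.r j ∧ P.d j ≤ t) ∧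
      ∀ j ∈ unserved P h, P.d j ≤ t → s < P.r j := by
  induction hh with
  | empty =>
    obtain ⟨m, hm⟩ := (P.jobs.image P.r).bddBelow
    refine ⟨m - 1, by simp, fun j hj _ => Int.sub_one_lt_of_le (hm ?_)⟩
    exact Finset.mem_coe.2 (Finset.mem_image_of_mem _ (unserved_subset_jobs hj))
  | @insert h Z hh hZ ih =>
    by_cases hfull : cap Z.level ≤ Z.jobs.card ∧ ∀ j ∈ Z.jobs, P.d j ≤ t
    · obtain ⟨s, hs, hU⟩ := ih
      refine ⟨s, Finset.forall_mem_insert _ _ _ |>.2 ⟨fun _ => ⟨hfull.1, fun j hj => ?_⟩, hs⟩,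
        fun j hj => hU j (mem_unserved_insert.1 hj).1⟩
      exact ⟨hU j (hZ.subset_unserved hj) (hfull.2 j hj), hfull.2 j hj⟩
    · -- An unserved job released by `Z.time` and due by `t` was left out of `Z`, so `Z` would be
      -- full of jobs with earlier deadlines.
      refine ⟨Z.time, Finset.forall_mem_insert _ _ _ |>.2 ⟨fun hlt => absurd hlt (lt_irrefl _),
        fun X hX hlt => absurd (hh.time_le_time hX hZ) hlt.not_ge⟩, fun j hj hjt => ?_⟩
      rw [mem_unserved_insert] at hj
      by_contra hr
      obtain ⟨hcap, hd⟩ := hZ.full_of_notMem j hj.1 (not_lt.1 hr) hj.2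
      exact hfull ⟨hcap, fun i hi => (hd i hi).trans hjt⟩

theorem exists_least_level_time_le (h : Finset Block) (s : ℤ) :
    ∃ k, (∀ X ∈ h, X.level = k → X.time ≤ s) ∧
      (k = 0 ∨ ∃ V ∈ h, V.level + 1 = k ∧ s < V.time) := by
  classical
  have hex : ∃ k, ∀ X ∈ h, X.level = k → X.time ≤ s := by
    obtain ⟨k, hk⟩ := Infinite.exists_notMem_finset (h.image Block.level)
    exact ⟨k, fun X hX hXk => absurd (Finset.mem_image.2 ⟨X, hX, hXk⟩) hk⟩
  refine ⟨Nat.find hex, Nat.find_spec hex, ?_⟩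
  cases hk : Nat.find hex with
  | zero => exact Or.inl rfl
  | succ k =>
    have hlt := Nat.find_min hex (m := k) (by omega)
    push Not at hlt
    obtain ⟨V, hV, rfl, hVs⟩ := hlt
    exact Or.inr ⟨V, hV, rfl, hVs⟩

theorem IsHistory.exists_nextBlock (hcap : ∀ k, 1 ≤ cap k) (hh : IsHistory cap P h)
    (hU : (unserved P h).Nonempty) : ∃ Y, NextBlock cap P h Y := by
  obtain ⟨j, hj, hmin⟩ := Finset.exists_min_image _ P.d hU
  obtain ⟨s, hs, hsU⟩ := hh.exists_start (P.d j)
  obtain ⟨k, hks, hk⟩ := exists_least_level_time_le h s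
  obtain ⟨Q, hQ, hQk, hfull⟩ :=
    exists_initial_subset_card_le P.d {i ∈ unserved P h | P.r i ≤ P.d j} (cap k)
  simp only [Finset.mem_filter, and_imp] at hfull
  have hQU : Q ⊆ unserved P h := hQ.trans (Finset.filter_subset _ _)
  have hdue : ∃ i ∈ Q, P.d i = P.d j := by
    by_cases hjQ : j ∈ Q
    · exact ⟨j, hjQ, rfl⟩
    · obtain ⟨hcard, hd⟩ := hfull j hj (P.window j (unserved_subset_jobs hj)) hjQ
      obtain ⟨i, hi⟩ : Q.Nonempty := Finset.card_pos.1 (Nat.cast_le.1 ((hcap k).trans hcard))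
      exact ⟨i, hi, (hd i hi).antisymm (hmin i (hQU hi))⟩
  refine ⟨⟨k, s, P.d j, Q⟩, hQU, fun i hi => (Finset.mem_filter.1 (hQ hi)).2, hmin, hdue, hQk,
    hfull, hks, ?_⟩
  obtain rfl | ⟨V, hV, hVk, hsV⟩ := hk
  · obtain ⟨i, hi, hid⟩ := hdue
    exact Or.inl ⟨rfl, i, hi, hsU i (hQU hi) hid.le, hid.le⟩
  · exact Or.inr ⟨V, hV, hVk, hs V hV hsV⟩

end Histories

section Completion

variable {cap : ℕ → ℕ∞} {P P' : SchedInstance} {h : Finset Block} {Y : Block} {τ : ℤ}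

open Classical in
/-- The blocks executed by the algorithm in total, if it has already executed those in `h`. Among
the admissible next blocks, one is chosen by a choice function that sees only which blocks are
admissible; hence runs on instances with the same admissible blocks agree. -/
noncomputable def completeHistory (cap : ℕ → ℕ∞) (P : SchedInstance) (h : Finset Block) :
    Finset Block :=
  if _hex : ∃ Y, NextBlock cap P h Y then
    completeHistory cap P (insert (Classical.epsilon (NextBlock cap P h)) h)
  else h
termination_by (unserved P h).card
decreasing_by exact Finset.card_lt_card (Classical.epsilon_spec _hex).unserved_insert_ssubset

theorem completeHistory_of_exists (hex : ∃ Y, NextBlock cap P h Y) :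
    completeHistory cap P h =
      completeHistory cap P (insert (Classical.epsilon (NextBlock cap P h)) h) := by
  rw [completeHistory, dif_pos hex]

theorem completeHistory_of_not_exists (hex : ¬∃ Y, NextBlock cap P h Y) :
    completeHistory cap P h = h := by
  rw [completeHistory, dif_neg hex]

theorem isHistory_completeHistory (hh : IsHistory cap P h) :
    IsHistory cap P (completeHistory cap P h) := by
  induction h using completeHistory.induct cap P with
  | case1 h hex ih =>
    rw [completeHistory_of_exists hex]
    exact ih (hh.insert (Classical.epsilon_spec hex))
  | case2 h hex => rwa [completeHistory_of_not_exists hex]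

theorem unserved_completeHistory_eq_empty (hcap : ∀ k, 1 ≤ cap k) (hh : IsHistory cap P h) :
    unserved P (completeHistory cap P h) = ∅ := by
  induction h using completeHistory.induct cap P with
  | case1 h hex ih =>
    rw [completeHistory_of_exists hex]
    exact ih (hh.insert (Classical.epsilon_spec hex))
  | case2 h hex =>
    rw [completeHistory_of_not_exists hex]
    exact Finset.not_nonempty_iff_eq_empty.1 fun hU => hex (hh.exists_nextBlock hcap hU)

/-- The two instances have the same jobs, with the same data, among those released up to `τ`. -/
def SchedInstance.AgreeUpTo (τ : ℤ) (P P' : SchedInstance) : Prop :=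
  (∀ j ∈ P.jobs, P.r j ≤ τ → j ∈ P'.jobs ∧ P'.r j = P.r j ∧ P'.d j = P.d j) ∧
    ∀ j ∈ P'.jobs, P'.r j ≤ τ → j ∈ P.jobs ∧ P.r j = P'.r j ∧ P.d j = P'.d j

theorem SchedInstance.AgreeUpTo.symm (hP : P.AgreeUpTo τ P') : P'.AgreeUpTo τ P :=
  And.symm hP

theorem SchedInstance.AgreeUpTo.mem_unserved (hP : P.AgreeUpTo τ P') {j : ℕ}
    (hj : j ∈ unserved P h) (hr : P.r j ≤ τ) :
    j ∈ unserved P' h ∧ P'.r j = P.r j ∧ P'.d j = P.d j := by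
  obtain ⟨hjP, hjh⟩ := _root_.mem_unserved.1 hj
  obtain ⟨hjP', hdata⟩ := hP.1 j hjP hr
  exact ⟨_root_.mem_unserved.2 ⟨hjP', hjh⟩, hdata⟩

theorem SchedInstance.AgreeUpTo.encloses (hP : P.AgreeUpTo τ P') {j : ℕ} (hj : j ∈ P.jobs)
    (hτ : Y.time ≤ τ) (hYj : Y.Encloses P j) : Y.Encloses P' j := by
  obtain ⟨-, hr, hd⟩ := hP.1 j hj ((P.window j hj).trans (hYj.2.trans hτ))
  rwa [Block.Encloses, hr, hd]

theorem NextBlock.of_agreeUpTo (hP : P.AgreeUpTo τ P') (hh : IsHistory cap P h)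
    (hY : NextBlock cap P h Y) (hτ : Y.time ≤ τ) : NextBlock cap P' h Y := by
  have hjobs : ∀ j ∈ Y.jobs, j ∈ unserved P' h ∧ P'.r j = P.r j ∧ P'.d j = P.d j := fun j hj =>
    hP.mem_unserved (hY.subset_unserved hj) ((hY.release_le_time j hj).trans hτ)
  refine ⟨fun j hj => (hjobs j hj).1, fun j hj => ?_, fun j hj => ?_, ?_, hY.card_le,
    fun j hj hr hjY => ?_, hY.time_le_start, ?_⟩
  · rw [(hjobs j hj).2.1]
    exact hY.release_le_time j hj
  · by_contra! hlt
    obtain ⟨hj', -, hd⟩ := hP.symm.mem_unserved hj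
      ((P'.window j (unserved_subset_jobs hj)).trans (hlt.le.trans hτ))
    exact (hY.time_le_deadline j hj').not_gt (hd ▸ hlt)
  · obtain ⟨j, hj, hjt⟩ := hY.exists_due
    exact ⟨j, hj, (hjobs j hj).2.2.trans hjt⟩
  · obtain ⟨hj', hr', hd'⟩ := hP.symm.mem_unserved hj (hr.trans hτ)
    obtain ⟨hcap, hd⟩ := hY.full_of_notMem j hj' (hr'.trans_le hr) hjY
    refine ⟨hcap, fun i hi => ?_⟩
    rw [(hjobs i hi).2.2, ← hd']
    exact hd i hi
  · refine hY.level_justified.imp ?_ ?_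
    · rintro ⟨h0, j, hj, hYj⟩
      exact ⟨h0, j, hj, hP.encloses (unserved_subset_jobs (hY.subset_unserved hj)) hτ hYj⟩
    · rintro ⟨V, hV, hl, hfull, hVY⟩
      exact ⟨V, hV, hl, hfull, fun j hj => hP.encloses (hh.jobs_subset hV hj) hτ (hVY j hj)⟩

theorem nextBlock_eq_of_agreeUpTo (hP : P.AgreeUpTo τ P') (hh : IsHistory cap P h)
    (hh' : IsHistory cap P' h) (hY : NextBlock cap P h Y) (hτ : Y.time ≤ τ) :
    NextBlock cap P h = NextBlock cap P' h := by
  have hY' := hY.of_agreeUpTo hP hh hτ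
  ext Z
  exact ⟨fun hZ => hZ.of_agreeUpTo hP hh (hY.time_eq hZ ▸ hτ),
    fun hZ => hZ.of_agreeUpTo hP.symm hh' (hY'.time_eq hZ ▸ hτ)⟩

theorem filter_completeHistory_of_lt (hlate : ∀ Y, NextBlock cap P h Y → τ < Y.time) :
    (completeHistory cap P h).filter (fun Y => Y.time ≤ τ) = h.filter (fun Y => Y.time ≤ τ) := by
  induction h using completeHistory.induct cap P with
  | case1 h hex ih =>
    have hZ := Classical.epsilon_spec hex
    have hlate' := hlate _ hZ
    rw [completeHistory_of_exists hex, ih fun Y hY => hlate'.trans_le (hZ.time_le_of_insert hY),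
      Finset.filter_insert, if_neg hlate'.not_ge]
  | case2 h hex => rw [completeHistory_of_not_exists hex]

theorem filter_completeHistory_eq_of_agreeUpTo (hP : P.AgreeUpTo τ P') (hh : IsHistory cap P h)
    (hh' : IsHistory cap P' h) :
    (completeHistory cap P h).filter (fun Y => Y.time ≤ τ) =
      (completeHistory cap P' h).filter (fun Y => Y.time ≤ τ) := by
  induction h using completeHistory.induct cap P with
  | case1 h hex ih =>
    have hZ := Classical.epsilon_spec hex
    by_cases hτ : (Classical.epsilon (NextBlock cap P h)).time ≤ τ
    · have heq := nextBlock_eq_of_agreeUpTo hP hh hh' hZ hτ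
      have hex' : ∃ Y, NextBlock cap P' h Y := heq ▸ hex
      rw [completeHistory_of_exists hex, completeHistory_of_exists hex', ← heq]
      exact ih (hh.insert hZ) (hh'.insert (hZ.of_agreeUpTo hP hh hτ))
    · rw [not_le] at hτ
      rw [filter_completeHistory_of_lt fun Y hY => hZ.time_eq hY ▸ hτ,
        filter_completeHistory_of_lt fun Y hY => ?_]
      by_contra! hYτ
      exact hτ.not_ge (hZ.time_eq (hY.of_agreeUpTo hP.symm hh' hYτ) ▸ hYτ)
  | case2 h hex =>
    rw [completeHistory_of_not_exists hex, filter_completeHistory_of_lt fun Y hY => ?_]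
    by_contra! hYτ
    exact hex ⟨Y, hY.of_agreeUpTo hP.symm hh' hYτ⟩

end Completion

section Charging

variable {cap : ℕ → ℕ∞} {B : ℕ → ℕ} {P : SchedInstance} {h : Finset Block} {S : Finset Batch}
  {lev : ℕ → ℕ}

theorem two_pow_mul_cap_le (hdbl : ∀ k, 2 * cap k ≤ cap (k + 1)) (k m : ℕ) :
    2 ^ m * cap k ≤ cap (k + m) := by
  induction m with
  | zero => simp
  | succ m ih =>
    calc 2 ^ (m + 1) * cap k = 2 * (2 ^ m * cap k) := by rw [pow_succ', mul_assoc]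
      _ ≤ 2 * cap (k + m) := by gcongr
      _ ≤ cap (k + (m + 1)) := hdbl _

theorem two_pow_div_le_two_pow_div (hdbl : ∀ k, 2 * cap k ≤ cap (k + 1)) {k l n q : ℕ}
    (hlk : l ≤ k) (hn : cap k ≤ n) (hq : 0 < q) (hql : q ≤ cap l) :
    (2 : ℝ) ^ k / n ≤ 2 ^ l / q := by
  obtain ⟨m, rfl⟩ := Nat.exists_eq_add_of_le hlk
  have hle : 2 ^ m * q ≤ n := by
    have : (2 : ℕ∞) ^ m * q ≤ n :=
      (mul_le_mul_right hql _).trans ((two_pow_mul_cap_le hdbl l m).trans hn)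
    exact_mod_cast this
  have hn0 : 0 < n := lt_of_lt_of_le (by positivity) hle
  rw [div_le_div_iff₀ (by positivity) (by positivity), pow_add, mul_assoc]
  gcongr
  exact_mod_cast hle

/-- The cost attributed to the job `j` if every batch `X` of `S` divides the cost `v X` equally
among its jobs. -/
noncomputable def costShare (S : Finset Batch) (v : Batch → ℝ) (j : ℕ) : ℝ :=
  ∑ X ∈ S with j ∈ X.bjobs, v X / X.bjobs.card

theorem costShare_nonneg {v : Batch → ℝ} (hv : ∀ X, 0 ≤ v X) (j : ℕ) : 0 ≤ costShare S v j :=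
  Finset.sum_nonneg fun X _ => div_nonneg (hv X) (Nat.cast_nonneg _)

theorem div_card_le_costShare {v : Batch → ℝ} (hv : ∀ X, 0 ≤ v X) {X : Batch} (hX : X ∈ S) {j : ℕ}
    (hj : j ∈ X.bjobs) : v X / X.bjobs.card ≤ costShare S v j :=
  Finset.single_le_sum (f := fun X : Batch => v X / X.bjobs.card)
    (fun X _ => div_nonneg (hv X) (Nat.cast_nonneg _)) (Finset.mem_filter.2 ⟨hX, hj⟩)

theorem sum_costShare_le {v : Batch → ℝ} (hv : ∀ X, 0 ≤ v X) (J : Finset ℕ) :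
    ∑ j ∈ J, costShare S v j ≤ ∑ X ∈ S, v X := by
  simp only [costShare, Finset.sum_filter]
  rw [Finset.sum_comm]
  refine Finset.sum_le_sum fun X _ => ?_
  have hcard : ((J.filter (· ∈ X.bjobs)).card : ℝ) ≤ X.bjobs.card := by
    gcongr
    exact fun j hj => (Finset.mem_filter.1 hj).2
  calc ∑ j ∈ J, (if j ∈ X.bjobs then v X / X.bjobs.card else 0)
      = v X * ((J.filter (· ∈ X.bjobs)).card / X.bjobs.card) := by
        rw [← Finset.sum_filter, Finset.sum_const, nsmul_eq_mul, mul_div_left_comm]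
    _ ≤ v X := mul_le_of_le_one_right (hv X) (div_le_one_of_le₀ hcard (Nat.cast_nonneg _))

/-- The batch `X`, whose machine type has level `lev X.btype`, has at least the level of the block
`Y` and is executed in its interval. -/
abbrev Batch.Hits (lev : ℕ → ℕ) (X : Batch) (Y : Block) : Prop :=
  Y.level ≤ lev X.btype ∧ Y.start < X.time ∧ X.time ≤ Y.time

theorem IsHistory.sum_hits_le (hh : IsHistory cap P h) (lev : ℕ → ℕ) (X : Batch) :
    ∑ Y ∈ h with X.Hits lev Y, (2 : ℝ) ^ Y.level ≤ 2 * 2 ^ lev X.btype := by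
  have hinj : Set.InjOn Block.level ({Y ∈ h | X.Hits lev Y} : Finset Block) :=
    (hh.injOn_level X.time).mono fun _ hY => (Finset.mem_filter.1 hY).imp_right And.right
  rw [← Finset.sum_image (f := fun k => (2 : ℝ) ^ k) hinj]
  refine (Finset.sum_le_sum_of_subset_of_nonneg (Finset.image_subset_iff.2 fun Y hY => ?_)
    fun _ _ _ => by positivity).trans (sum_two_pow_range_le _)
  exact Finset.mem_range_succ_iff.2 (Finset.mem_filter.1 hY).2.1

theorem IsHistory.sum_hit_le (hh : IsHistory cap P h) (lev : ℕ → ℕ) (S : Finset Batch) :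
    ∑ Y ∈ h with ∃ X ∈ S, X.Hits lev Y, (2 : ℝ) ^ Y.level ≤ 2 * ∑ X ∈ S, 2 ^ lev X.btype := by
  have hunion : {Y ∈ h | ∃ X ∈ S, X.Hits lev Y} = S.biUnion fun X => {Y ∈ h | X.Hits lev Y} := by
    ext Y
    simp only [Finset.mem_filter, Finset.mem_biUnion]
    tauto
  rw [hunion, Finset.mul_sum]
  exact (sum_biUnion_le_sum_sum (fun _ => by positivity) _ _).trans
    (Finset.sum_le_sum fun X _ => hh.sum_hits_le lev X)

/-- The jobs charged for the block `Y` of a history `h` if no batch hits it. -/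
def chargedJobs (P : SchedInstance) (h : Finset Block) (Y : Block) : Finset ℕ :=
  {j ∈ P.jobs | Y.Encloses P j ∧ ∃ V ∈ h, V.level + 1 = Y.level ∧ j ∈ V.jobs}

theorem IsHistory.pairwiseDisjoint_chargedJobs (hh : IsHistory cap P h) :
    (h : Set Block).PairwiseDisjoint (chargedJobs P h) := by
  refine fun Y hY Y' hY' hne => Finset.disjoint_left.2 fun j hj hj' => hne ?_
  obtain ⟨hjP, ⟨hs, hd⟩, V, hV, hl, hjV⟩ := Finset.mem_filter.1 hj
  obtain ⟨-, ⟨hs', hd'⟩, V', hV', hl', hjV'⟩ := Finset.mem_filter.1 hj'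
  obtain rfl : V = V' := hh.pairwise_disjoint_jobs.elim_finset hV hV' j hjV hjV'
  have hrd := P.window j hjP
  exact hh.injOn_level (P.r j) ⟨hY, hs, hrd.trans hd⟩ ⟨hY', hs', hrd.trans hd'⟩ (hl.symm.trans hl')

theorem ValidSchedule.exists_mem_lev_lt_level (hS : ValidSchedule B P S) {Y : Block}
    (hmiss : ¬∃ X ∈ S, X.Hits lev Y) {j : ℕ} (hj : j ∈ P.jobs) (hYj : Y.Encloses P j) :
    ∃ X ∈ S, j ∈ X.bjobs ∧ lev X.btype < Y.level := by
  obtain ⟨-, hwindow, -, hcover⟩ := hS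
  obtain ⟨X, hX, hjX⟩ := hcover j hj
  obtain ⟨-, hr, hd⟩ := hwindow X hX j hjX
  refine ⟨X, hX, hjX, ?_⟩
  by_contra! hlt
  exact hmiss ⟨X, hX, hlt, hYj.1.trans_le hr, hd.trans hYj.2⟩

theorem two_pow_le_sum_costShare (hdbl : ∀ k, 2 * cap k ≤ cap (k + 1))
    (hlev : ∀ m, B m ≤ cap (lev m)) (hcard : ∀ X ∈ S, X.bjobs.card ≤ B X.btype) {k : ℕ}
    {J : Finset ℕ} (hJ : J.Nonempty) (hfull : cap k ≤ J.card)
    (hserved : ∀ j ∈ J, ∃ X ∈ S, j ∈ X.bjobs ∧ lev X.btype ≤ k) :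
    (2 : ℝ) ^ k ≤ ∑ j ∈ J, costShare S (fun X => 2 ^ lev X.btype) j := by
  have hv : ∀ X : Batch, (0 : ℝ) ≤ 2 ^ lev X.btype := fun _ => by positivity
  have hshare : ∀ j ∈ J, (2 : ℝ) ^ k / J.card ≤ costShare S (fun X => 2 ^ lev X.btype) j := by
    intro j hj
    obtain ⟨X, hX, hjX, hle⟩ := hserved j hj
    have hXcap : (X.bjobs.card : ℕ∞) ≤ cap (lev X.btype) :=
      (Nat.cast_le.2 (hcard X hX)).trans (hlev _)
    exact (two_pow_div_le_two_pow_div hdbl hle hfull (Finset.card_pos.2 ⟨j, hjX⟩) hXcap).trans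
      (div_card_le_costShare hv hX hjX)
  calc (2 : ℝ) ^ k = ∑ _j ∈ J, (2 : ℝ) ^ k / J.card := by
        rw [Finset.sum_const, nsmul_eq_mul,
          mul_div_cancel₀ _ (Nat.cast_ne_zero.2 hJ.card_ne_zero)]
    _ ≤ ∑ j ∈ J, costShare S (fun X => 2 ^ lev X.btype) j := Finset.sum_le_sum hshare

theorem IsHistory.two_pow_le_sum_chargedJobs (hdbl : ∀ k, 2 * cap k ≤ cap (k + 1))
    (hlev : ∀ m, B m ≤ cap (lev m)) (hh : IsHistory cap P h) (hS : ValidSchedule B P S) {Y : Block}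
    (hY : Y ∈ h) (hmiss : ¬∃ X ∈ S, X.Hits lev Y) :
    (2 : ℝ) ^ Y.level ≤
      2 * ∑ j ∈ chargedJobs P h Y, costShare S (fun X => 2 ^ lev X.btype) j := by
  obtain ⟨h', hsub, hY'⟩ := hh.exists_nextBlock_of_mem hY
  rcases hY'.level_justified with ⟨h0, j, hj, hYj⟩ | ⟨V, hV, hl, hfull, hVY⟩
  · obtain ⟨X, -, -, hlt⟩ := hS.exists_mem_lev_lt_level hmiss (hh.jobs_subset hY hj) hYj
    exact absurd hlt (by omega)
  have hVP := hh.jobs_subset (hsub hV)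
  have hserved : ∀ j ∈ V.jobs, ∃ X ∈ S, j ∈ X.bjobs ∧ lev X.btype ≤ V.level := by
    intro j hj
    obtain ⟨X, hX, hjX, hlt⟩ := hS.exists_mem_lev_lt_level hmiss (hVP hj) (hVY j hj)
    exact ⟨X, hX, hjX, by omega⟩
  have hne : V.jobs.Nonempty := by
    obtain ⟨_, -, hV'⟩ := hh.exists_nextBlock_of_mem (hsub hV)
    exact hV'.exists_due.imp fun _ hj => hj.1
  have hv : ∀ X : Batch, (0 : ℝ) ≤ 2 ^ lev X.btype := fun _ => by positivity
  have hcharged : V.jobs ⊆ chargedJobs P h Y := fun j hj =>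
    Finset.mem_filter.2 ⟨hVP hj, hVY j hj, V, hsub hV, hl, hj⟩
  calc (2 : ℝ) ^ Y.level = 2 * 2 ^ V.level := by rw [← hl, pow_succ']
    _ ≤ 2 * ∑ j ∈ V.jobs, costShare S (fun X => 2 ^ lev X.btype) j := by
        gcongr
        exact two_pow_le_sum_costShare hdbl hlev hS.1 hne hfull hserved
    _ ≤ 2 * ∑ j ∈ chargedJobs P h Y, costShare S (fun X => 2 ^ lev X.btype) j := by
        gcongr
        exact fun j _ _ => costShare_nonneg hv j

theorem IsHistory.sum_not_hit_le (hdbl : ∀ k, 2 * cap k ≤ cap (k + 1))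
    (hlev : ∀ m, B m ≤ cap (lev m)) (hh : IsHistory cap P h) (hS : ValidSchedule B P S) :
    ∑ Y ∈ h with ¬∃ X ∈ S, X.Hits lev Y, (2 : ℝ) ^ Y.level ≤ 2 * ∑ X ∈ S, 2 ^ lev X.btype := by
  set v : Batch → ℝ := fun X => 2 ^ lev X.btype
  have hv : ∀ X, 0 ≤ v X := fun _ => by positivity
  calc ∑ Y ∈ h with ¬∃ X ∈ S, X.Hits lev Y, (2 : ℝ) ^ Y.level
      ≤ ∑ Y ∈ h with ¬∃ X ∈ S, X.Hits lev Y, 2 * ∑ j ∈ chargedJobs P h Y, costShare S v j := by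
        gcongr with Y hY
        rw [Finset.mem_filter] at hY
        exact hh.two_pow_le_sum_chargedJobs hdbl hlev hS hY.1 hY.2
    _ ≤ ∑ Y ∈ h, 2 * ∑ j ∈ chargedJobs P h Y, costShare S v j :=
        Finset.sum_le_sum_of_subset_of_nonneg (Finset.filter_subset _ _) fun Y _ _ =>
          mul_nonneg zero_le_two (Finset.sum_nonneg fun j _ => costShare_nonneg hv j)
    _ = 2 * ∑ j ∈ h.biUnion (chargedJobs P h), costShare S v j := by
        rw [← Finset.mul_sum, Finset.sum_biUnion hh.pairwiseDisjoint_chargedJobs]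
    _ ≤ 2 * ∑ X ∈ S, v X := by
        gcongr
        exact sum_costShare_le hv _

theorem IsHistory.sum_two_pow_level_le (hdbl : ∀ k, 2 * cap k ≤ cap (k + 1))
    (hlev : ∀ m, B m ≤ cap (lev m)) (hh : IsHistory cap P h) (hS : ValidSchedule B P S) :
    ∑ Y ∈ h, (2 : ℝ) ^ Y.level ≤ 4 * ∑ X ∈ S, 2 ^ lev X.btype := by
  have hhit := hh.sum_hit_le lev S
  have hmiss := hh.sum_not_hit_le hdbl hlev hS
  rw [← Finset.sum_filter_add_sum_filter_not h fun Y => ∃ X ∈ S, X.Hits lev Y]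
  linarith

end Charging

section Machines

variable {c : ℕ → ℝ} {B : ℕ → ℕ}

/-- The largest number of jobs that fit on a multiset of machines of total cost at most `b`. It is
`⊤` if there is no largest number, and `0` if `b` admits no machines at all. -/
noncomputable def capacityWithin (c : ℕ → ℝ) (B : ℕ → ℕ) (b : ℝ) : ℕ∞ :=
  ⨆ (M : Multiset ℕ) (_ : (M.map c).sum ≤ b), ((M.map B).sum : ℕ∞)

theorem sum_map_le_capacityWithin {M : Multiset ℕ} {b : ℝ} (hM : (M.map c).sum ≤ b) :
    (M.map B).sum ≤ capacityWithin c B b :=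
  le_iSup₂_of_le M hM le_rfl

theorem natCast_le_capacityWithin {b : ℝ} (hb : 0 ≤ b) {n : ℕ} :
    n ≤ capacityWithin c B b ↔ ∃ M : Multiset ℕ, (M.map c).sum ≤ b ∧ n ≤ (M.map B).sum := by
  refine ⟨fun hn => ?_, fun ⟨M, hM, hn⟩ => (Nat.cast_le.2 hn).trans (sum_map_le_capacityWithin hM)⟩
  rcases n with _ | n
  · exact ⟨0, by simpa using hb, Nat.zero_le _⟩
  · have hlt : (n : ℕ∞) < capacityWithin c B b := (Nat.cast_lt.2 n.lt_succ_self).trans_le hn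
    simp only [capacityWithin, lt_iSup_iff, Nat.cast_lt] at hlt
    obtain ⟨M, hM, hn⟩ := hlt
    exact ⟨M, hM, hn⟩

theorem le_capacityWithin {m : ℕ} {b : ℝ} (hm : c m ≤ b) : B m ≤ capacityWithin c B b := by
  simpa using sum_map_le_capacityWithin (c := c) (B := B) (M := {m}) (by simpa using hm)

theorem two_mul_capacityWithin_le (b : ℝ) :
    2 * capacityWithin c B b ≤ capacityWithin c B (2 * b) := by
  rw [capacityWithin]
  simp only [ENat.mul_iSup]
  refine iSup₂_le fun M hM => ?_
  have hMM : ((M + M).map c).sum ≤ 2 * b := by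
    rw [Multiset.map_add, Multiset.sum_add]
    linarith
  have hle := sum_map_le_capacityWithin (B := B) hMM
  rwa [Multiset.map_add, Multiset.sum_add, Nat.cast_add, ← two_mul] at hle

theorem schedCost_insert_le (hc : ∀ k, 0 ≤ c k) (X : Batch) (S : Finset Batch) :
    schedCost c (insert X S) ≤ c X.btype + schedCost c S := by
  by_cases hX : X ∈ S
  · rw [Finset.insert_eq_of_mem hX]
    exact le_add_of_nonneg_left (hc _)
  · rw [schedCost, Finset.sum_insert hX, schedCost]

/-- The instance whose jobs `Q` must all be executed at time `t`. -/
def SchedInstance.atTime (t : ℤ) (Q : Finset ℕ) : SchedInstance :=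
  ⟨Q, fun _ => t, fun _ => t, fun _ _ => le_rfl⟩

/-- The schedule `S` executes exactly the jobs `Q`, all at time `t`, at a cost of at most `b`. -/
structure IsExecution (c : ℕ → ℝ) (B : ℕ → ℕ) (t : ℤ) (Q : Finset ℕ) (b : ℝ)
    (S : Finset Batch) : Prop where
  validSchedule : ValidSchedule B (.atTime t Q) S
  time_eq : ∀ X ∈ S, X.time = t
  schedCost_le : schedCost c S ≤ b

theorem ValidSchedule.insert_atTime {t : ℤ} {Q R : Finset ℕ} {k : ℕ} {S : Finset Batch}
    (hRQ : R ⊆ Q) (hR : R.card ≤ B k) (hS : ValidSchedule B (.atTime t (Q \ R)) S) :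
    ValidSchedule B (.atTime t Q) (insert ⟨k, t, R⟩ S) := by
  obtain ⟨hcard, hwindow, hdisj, hcover⟩ := hS
  have hdisjR : ∀ X ∈ S, Disjoint R X.bjobs := fun X hX =>
    Finset.disjoint_right.2 fun j hj => (Finset.mem_sdiff.1 (hwindow X hX j hj).1).2
  refine ⟨Finset.forall_mem_insert _ _ _ |>.2 ⟨hR, hcard⟩, Finset.forall_mem_insert _ _ _ |>.2
    ⟨fun j hj => ⟨hRQ hj, le_rfl, le_rfl⟩, fun X hX j hj => ?_⟩, ?_, fun j hj => ?_⟩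
  · exact ⟨Finset.sdiff_subset (hwindow X hX j hj).1, (hwindow X hX j hj).2⟩
  · have hpair := Set.Pairwise.insert_of_symm (r := Function.onFun Disjoint Batch.bjobs)
      (s := (S : Set Batch)) (fun X hX Y hY => hdisj X hX Y hY) (a := ⟨k, t, R⟩)
      fun X hX _ => hdisjR X hX
    rw [← Finset.coe_insert] at hpair
    exact fun X hX Y hY hne => hpair hX hY hne
  · by_cases hjR : j ∈ R
    · exact ⟨_, Finset.mem_insert_self _ _, hjR⟩
    · obtain ⟨X, hX, hjX⟩ := hcover j (Finset.mem_sdiff.2 ⟨hj, hjR⟩)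
      exact ⟨X, Finset.mem_insert_of_mem hX, hjX⟩

theorem exists_isExecution_of_card_le_sum (hc : ∀ k, 0 ≤ c k) (t : ℤ) (M : Multiset ℕ)
    (Q : Finset ℕ) (hQ : Q.card ≤ (M.map B).sum) : ∃ S, IsExecution c B t Q (M.map c).sum S := by
  induction M using Multiset.induction_on generalizing Q with
  | empty =>
    obtain rfl : Q = ∅ := by simpa using hQ
    exact ⟨∅, by simp [ValidSchedule, SchedInstance.atTime], by simp, by simp [schedCost]⟩
  | cons k M ih =>
    rw [Multiset.map_cons, Multiset.sum_cons] at hQ ⊢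
    obtain ⟨R, hRQ, hR⟩ := Finset.exists_subset_card_eq (min_le_right (B k) Q.card)
    have hrest : (Q \ R).card ≤ (M.map B).sum := by
      rw [Finset.card_sdiff_of_subset hRQ]
      omega
    obtain ⟨S, hS, htime, hcost⟩ := ih (Q \ R) hrest
    refine ⟨insert ⟨k, t, R⟩ S, hS.insert_atTime hRQ (hR.trans_le (min_le_left _ _)),
      Finset.forall_mem_insert _ _ _ |>.2 ⟨rfl, htime⟩, ?_⟩
    exact (schedCost_insert_le hc _ _).trans (by gcongr)

theorem exists_isExecution (hc : ∀ k, 0 ≤ c k) (t : ℤ) {Q : Finset ℕ} {b : ℝ} (hb : 0 ≤ b)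
    (hQ : Q.card ≤ capacityWithin c B b) : ∃ S, IsExecution c B t Q b S := by
  obtain ⟨M, hMc, hMB⟩ := (natCast_le_capacityWithin hb).1 hQ
  obtain ⟨S, hS⟩ := exists_isExecution_of_card_le_sum hc t M Q hMB
  exact ⟨S, hS.validSchedule, hS.time_eq, hS.schedCost_le.trans hMc⟩

end Machines

section Algorithm

variable {c : ℕ → ℝ} {B : ℕ → ℕ} {u : ℝ} {cap : ℕ → ℕ∞} {P : SchedInstance} {h : Finset Block}
  {σ : Block → Finset Batch}

/-- The largest number of jobs that fit into a block of level `k` if the cost unit is `u`. -/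
noncomputable def levelCap (c : ℕ → ℝ) (B : ℕ → ℕ) (u : ℝ) (k : ℕ) : ℕ∞ :=
  capacityWithin c B (u * 2 ^ k)

theorem two_mul_levelCap_le (k : ℕ) : 2 * levelCap c B u k ≤ levelCap c B u (k + 1) := by
  rw [levelCap, levelCap, pow_succ', mul_left_comm]
  exact two_mul_capacityWithin_le _

theorem one_le_levelCap (hu : 0 ≤ u) {m : ℕ} (hm : c m ≤ u) (hB : 1 ≤ B m) (k : ℕ) :
    1 ≤ levelCap c B u k := by
  have hmk : c m ≤ u * 2 ^ k := hm.trans (le_mul_of_one_le_right hu (one_le_pow₀ one_le_two))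
  exact (Nat.one_le_cast.2 hB).trans (le_capacityWithin hmk)

/-- Some schedule that executes the block `Y`. It depends on `Y` only, as causality requires. -/
noncomputable def realize (c : ℕ → ℝ) (B : ℕ → ℕ) (u : ℝ) (Y : Block) : Finset Batch :=
  Classical.epsilon (IsExecution c B Y.time Y.jobs (u * 2 ^ Y.level))

theorem IsHistory.isExecution_realize (hc : ∀ k, 0 ≤ c k) (hu : 0 ≤ u)
    (hh : IsHistory (levelCap c B u) P h) {Y : Block} (hY : Y ∈ h) :
    IsExecution c B Y.time Y.jobs (u * 2 ^ Y.level) (realize c B u Y) := by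
  obtain ⟨_, -, hY⟩ := hh.exists_nextBlock_of_mem hY
  exact Classical.epsilon_spec (exists_isExecution hc Y.time (by positivity) hY.card_le)

theorem IsHistory.validSchedule_biUnion (hh : IsHistory cap P h) (hU : unserved P h = ∅)
    (hσ : ∀ Y ∈ h, ValidSchedule B (.atTime Y.time Y.jobs) (σ Y)) :
    ValidSchedule B P (h.biUnion σ) := by
  refine ⟨fun X hX => ?_, fun X hX j hj => ?_, fun X hX X' hX' hne => ?_, fun j hj => ?_⟩
  · obtain ⟨Y, hY, hX⟩ := Finset.mem_biUnion.1 hX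
    exact (hσ Y hY).1 X hX
  · obtain ⟨Y, hY, hX⟩ := Finset.mem_biUnion.1 hX
    obtain ⟨hjY, hr, hd⟩ := (hσ Y hY).2.1 X hX j hj
    have htime : X.time = Y.time := le_antisymm hd hr
    obtain ⟨_, -, hY'⟩ := hh.exists_nextBlock_of_mem hY
    rw [htime]
    exact ⟨hh.jobs_subset hY hjY, hY'.release_le_time j hjY,
      hY'.time_le_deadline j (hY'.subset_unserved hjY)⟩
  · obtain ⟨Y, hY, hX⟩ := Finset.mem_biUnion.1 hX
    obtain ⟨Y', hY', hX'⟩ := Finset.mem_biUnion.1 hX'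
    by_cases hYY' : Y = Y'
    · subst hYY'
      exact (hσ Y hY).2.2.1 X hX X' hX' hne
    · exact (hh.pairwise_disjoint_jobs hY hY' hYY').mono
        (fun j hj => ((hσ Y hY).2.1 X hX j hj).1) (fun j hj => ((hσ Y' hY').2.1 X' hX' j hj).1)
  · have hserved : j ∉ unserved P h := hU ▸ Finset.notMem_empty j
    rw [mem_unserved] at hserved
    push Not at hserved
    obtain ⟨Y, hY, hjY⟩ := hserved hj
    obtain ⟨X, hX, hjX⟩ := (hσ Y hY).2.2.2 j hjY
    exact ⟨X, Finset.mem_biUnion.2 ⟨Y, hY, hX⟩, hjX⟩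

theorem filter_biUnion_of_time_eq (hσ : ∀ Y ∈ h, ∀ X ∈ σ Y, X.time = Y.time) (τ : ℤ) :
    (h.biUnion σ).filter (fun X => X.time ≤ τ) =
      (h.filter (fun Y => Y.time ≤ τ)).biUnion σ := by
  ext X
  simp only [Finset.mem_filter, Finset.mem_biUnion]
  constructor
  · rintro ⟨⟨Y, hY, hX⟩, hτ⟩
    exact ⟨Y, ⟨hY, hσ Y hY X hX ▸ hτ⟩, hX⟩
  · rintro ⟨Y, ⟨hY, hτ⟩, hX⟩
    exact ⟨⟨Y, hY, hX⟩, hσ Y hY X hX ▸ hτ⟩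

/-- The schedule computed by the algorithm, where a block of level `k` may cost up to `u * 2 ^ k`.
-/
noncomputable def onlineSchedule (c : ℕ → ℝ) (B : ℕ → ℕ) (u : ℝ) (P : SchedInstance) :
    Finset Batch :=
  (completeHistory (levelCap c B u) P ∅).biUnion (realize c B u)

theorem validSchedule_onlineSchedule (hc : ∀ k, 0 ≤ c k) (hu : 0 ≤ u) {m : ℕ} (hm : c m ≤ u)
    (hB : 1 ≤ B m) : ValidSchedule B P (onlineSchedule c B u P) :=
  have hh := isHistory_completeHistory (cap := levelCap c B u) (P := P) .empty
  hh.validSchedule_biUnion (unserved_completeHistory_eq_empty (one_le_levelCap hu hm hB) .empty)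
    fun _ hY => (hh.isExecution_realize hc hu hY).validSchedule

theorem causal_onlineSchedule (hc : ∀ k, 0 ≤ c k) (hu : 0 ≤ u) :
    Causal (onlineSchedule c B u) := by
  intro P P' τ hjobs hdata
  have hagree : P.AgreeUpTo τ P' := by
    refine ⟨fun j hj hr => ?_, fun j hj hr => ?_⟩
    · have hmem : j ∈ P.jobs.filter (fun j => P.r j ≤ τ) := Finset.mem_filter.2 ⟨hj, hr⟩
      exact ⟨(Finset.mem_filter.1 (hjobs ▸ hmem)).1, (hdata j hmem).1.symm, (hdata j hmem).2.symm⟩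
    · have hmem : j ∈ P.jobs.filter (fun j => P.r j ≤ τ) := hjobs ▸ Finset.mem_filter.2 ⟨hj, hr⟩
      exact ⟨(Finset.mem_filter.1 hmem).1, hdata j hmem⟩
  have htime (P : SchedInstance) : ∀ Y ∈ completeHistory (levelCap c B u) P ∅,
      ∀ X ∈ realize c B u Y, X.time = Y.time := fun _ hY =>
    ((isHistory_completeHistory .empty).isExecution_realize hc hu hY).time_eq
  rw [onlineSchedule, onlineSchedule, filter_biUnion_of_time_eq (htime P),
    filter_biUnion_of_time_eq (htime P'),
    filter_completeHistory_eq_of_agreeUpTo hagree .empty .empty]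

theorem schedCost_onlineSchedule_le (hu : 0 < u) (hmin : ∀ k, u ≤ c k) {S : Finset Batch}
    (hS : ValidSchedule B P S) : schedCost c (onlineSchedule c B u P) ≤ 8 * schedCost c S := by
  have hc : ∀ k, 0 ≤ c k := fun k => hu.le.trans (hmin k)
  have hh := isHistory_completeHistory (cap := levelCap c B u) (P := P) .empty
  choose lev hlev hlev' using fun k => exists_mul_two_pow_mem_Icc hu (hmin k)
  calc schedCost c (onlineSchedule c B u P)
      ≤ ∑ Y ∈ completeHistory (levelCap c B u) P ∅, schedCost c (realize c B u Y) :=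
        sum_biUnion_le_sum_sum (fun X : Batch => hc X.btype) _ _
    _ ≤ ∑ Y ∈ completeHistory (levelCap c B u) P ∅, u * 2 ^ Y.level :=
        Finset.sum_le_sum fun Y hY => (hh.isExecution_realize hc hu.le hY).schedCost_le
    _ = u * ∑ Y ∈ completeHistory (levelCap c B u) P ∅, 2 ^ Y.level := by rw [Finset.mul_sum]
    _ ≤ u * (4 * ∑ X ∈ S, 2 ^ lev X.btype) := by
        gcongr
        exact hh.sum_two_pow_level_le two_mul_levelCap_le (fun k => le_capacityWithin (hlev k)) hS
    _ = 4 * ∑ X ∈ S, u * 2 ^ lev X.btype := by rw [← Finset.mul_sum, mul_left_comm]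
    _ ≤ 4 * ∑ X ∈ S, 2 * c X.btype := by
        gcongr 4 * ∑ X ∈ S, ?_
        exact hlev' _
    _ = 8 * schedCost c S := by
        rw [← Finset.mul_sum, ← mul_assoc, schedCost]
        norm_num

end Algorithm

theorem eight_competitive_online_algorithm_general (c : ℕ → ℝ) (B : ℕ → ℕ) (m : ℕ)
    (hm : 0 < c m) (hmin : ∀ k, c m ≤ c k) (hB : 1 ≤ B m) :
    ∃ A : SchedInstance → Finset Batch, Causal A ∧
      ∀ P : SchedInstance,
        ValidSchedule B P (A P) ∧ schedCost c (A P) ≤ 8 * OPT c B P := by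
  have hc : ∀ k, 0 ≤ c k := fun k => hm.le.trans (hmin k)
  refine ⟨onlineSchedule c B (c m), causal_onlineSchedule hc hm.le, fun P => ?_⟩
  have hvalid : ValidSchedule B P (onlineSchedule c B (c m) P) :=
    validSchedule_onlineSchedule hc hm.le le_rfl hB
  refine ⟨hvalid, ?_⟩
  rw [← div_le_iff₀' (by norm_num), OPT]
  refine le_csInf ⟨_, _, hvalid, rfl⟩ ?_
  rintro _ ⟨S, hS, rfl⟩
  rw [div_le_iff₀' (by norm_num)]
  exact schedCost_onlineSchedule_le hm hmin hS

/-- there is a deterministic (causal) online algorithm that on every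
instance outputs a valid schedule of cost at most `8 · OPT`. -/
theorem eight_competitive_online_algorithm
    (c : ℕ → ℝ) (B : ℕ → ℕ)
    (hc1 : ∀ k, 1 ≤ c k) (hcmono : StrictMono c)
    (hB1 : ∀ k, 1 ≤ B k) (hBmono : StrictMono B) :
    ∃ A : SchedInstance → Finset Batch, Causal A ∧
      ∀ P : SchedInstance,
        ValidSchedule B P (A P) ∧ schedCost c (A P) ≤ 8 * OPT c B P := by
  exact eight_competitive_online_algorithm_general c B 0 (zero_lt_one.trans_le (hc1 0))
    (fun k => hcmono.monotone k.zero_le) (hB1 0)
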